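/- (Improved Loéve–Young inequality.) For all p > 1 and q > 1 with 1/p + 1/q > 1, there exists a constant C_{p,q} > 0, depending only on p and q, such that: for every a < b and all functions f, g : [a;b] → ℝ with no common points of discontinuity, with f of finite p-variation and g of finite q-variation on [a;b], one has |∫_a^b f dg − f(a)·(g(b) − g(a))| ≤ C_{p,q} · ‖f‖_{p-var,[a;b]}^{p − p/q} · ‖f‖_{osc,[a;b]}^{1 + p/q − p} · ‖g‖_{q-var,[a;b]}, where ∫_a^b f dg denotes the Riemann–Stieltjes integral (which exists under these hypotheses). -/

import Mathlib

open Filter Set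

/-- Truncated variation of `f` on `[a;b]` with truncation parameter `δ`. -/
noncomputable def truncVar (f : ℝ → ℝ) (δ a b : ℝ) : ENNReal :=
  ⨆ (n : ℕ) (t : Fin (n + 1) → ℝ) (_ : StrictMono t)
    (_ : ∀ i, t i ∈ Set.Icc a b),
    ∑ i : Fin n, ENNReal.ofReal (|f (t i.succ) - f (t i.castSucc)| - δ)

/-- p-variation of `f` on `[a;b]`. -/
noncomputable def pVar (f : ℝ → ℝ) (p a b : ℝ) : ENNReal :=
  ⨆ (n : ℕ) (t : Fin (n + 1) → ℝ) (_ : StrictMono t)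
    (_ : ∀ i, t i ∈ Set.Icc a b),
    ∑ i : Fin n, ENNReal.ofReal (|f (t i.succ) - f (t i.castSucc)| ^ p)

/-- The p-variation norm `(V^p(f,[a;b]))^{1/p}`. -/
noncomputable def pVarNorm (f : ℝ → ℝ) (p a b : ℝ) : ℝ :=
  (pVar f p a b).toReal ^ (1 / p)

/-- Oscillation norm `sup_{a ≤ s < t ≤ b} |f t - f s|`. -/
noncomputable def oscNorm (f : ℝ → ℝ) (a b : ℝ) : ℝ :=
  sSup {x | ∃ s ∈ Set.Icc a b, ∃ t ∈ Set.Icc a b, s < t ∧ x = |f t - f s|}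

/-- Sup norm `sup_{a ≤ t ≤ b} |f t|`. -/
noncomputable def supNorm (f : ℝ → ℝ) (a b : ℝ) : ℝ :=
  sSup {x | ∃ t ∈ Set.Icc a b, x = |f t|}

/-- `I` is the Riemann–Stieltjes integral `∫_a^b f dg`. -/
def RSIntegral (f g : ℝ → ℝ) (a b : ℝ) (I : ℝ) : Prop :=
  ∀ ε > (0 : ℝ), ∃ δ > (0 : ℝ), ∀ (n : ℕ) (t : Fin (n + 1) → ℝ) (ξ : Fin n → ℝ),
    StrictMono t → t 0 = a → t (Fin.last n) = b →
    (∀ i : Fin n, t i.castSucc ≤ ξ i ∧ ξ i ≤ t i.succ) →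
    (∀ i : Fin n, t i.succ - t i.castSucc < δ) →
    |∑ i : Fin n, f (ξ i) * (g (t i.succ) - g (t i.castSucc)) - I| < ε

/-- `f` is regulated on `[a;b]`: all the relevant one-sided limits exist and are finite. -/
def Regulated (f : ℝ → ℝ) (a b : ℝ) : Prop :=
  (∃ L : ℝ, Tendsto f (nhdsWithin a (Set.Ioi a)) (nhds L)) ∧
  (∃ L : ℝ, Tendsto f (nhdsWithin b (Set.Iio b)) (nhds L)) ∧
  ∀ x ∈ Set.Ioo a b,
    (∃ L : ℝ, Tendsto f (nhdsWithin x (Set.Iio x)) (nhds L)) ∧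
    (∃ L : ℝ, Tendsto f (nhdsWithin x (Set.Ioi x)) (nhds L))

/-- `f` and `g` have no common points of discontinuity on `[a;b]`. -/
def NoCommonDiscont (f g : ℝ → ℝ) (a b : ℝ) : Prop :=
  ∀ x ∈ Set.Icc a b,
    ContinuousWithinAt f (Set.Icc a b) x ∨ ContinuousWithinAt g (Set.Icc a b) x

/-!
Deleting a node `y` with neighbours `x < y < z` from a partition changes the left-tagged
Riemann–Stieltjes sum by `(f y - f x) * (g z - g y)`. If `N` nodes can be deleted, then by Markov's
inequality one of them has `|f y - f x| ≤ A (2 / N) ^ (1 / p)` and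
`|g z - g y| ≤ B (2 / N) ^ (1 / q)` simultaneously, where `A` and `B` are the variation norms. The
first factor is moreover at most the oscillation `ω` of `f`, so deleting all interior nodes greedily
costs at most `∑ N, min ω (A (2 / N) ^ (1 / p)) * B (2 / N) ^ (1 / q)`, which is compared with an
integral that scales as `A ^ (p - p / q) * ω ^ (1 + p / q - p) * B`.

If on every cell of a partition one of `f` and `g` oscillates by at most `ε`, the same estimate
shows that refining the partition or moving the tags changes the sum by an amount tending to `0`
with `ε`. Without common discontinuities every sufficiently fine partition is of this kind, whence
the existence of the integral.
-/

open MeasureTheory Topology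

section Gaps

variable {α R : Type*} [LinearOrder α] [Ring R] {s : Finset α} {x y z : α}

/-- The pairs of neighbouring elements of `s`: the cells of the partition with nodes `s`. -/
def gaps (s : Finset α) : Finset (α × α) :=
  {c ∈ s ×ˢ s | c.1 < c.2 ∧ ∀ w ∈ s, w ≤ c.1 ∨ c.2 ≤ w}

lemma mem_gaps : (x, y) ∈ gaps s ↔ x ∈ s ∧ y ∈ s ∧ x < y ∧ ∀ w ∈ s, w ≤ x ∨ y ≤ w := by
  simp only [gaps, Finset.mem_filter, Finset.mem_product, and_assoc]

lemma exists_mem_gaps_of_notMem {u v : α} (hu : u ∈ s) (huy : u < y) (hv : v ∈ s) (hyv : y < v)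
    (hy : y ∉ s) : ∃ x z, (x, z) ∈ gaps s ∧ x < y ∧ y < z := by
  obtain ⟨x, hx, hx_max⟩ := Finset.exists_max_image {w ∈ s | w < y} id
    ⟨u, Finset.mem_filter.2 ⟨hu, huy⟩⟩
  obtain ⟨z, hz, hz_min⟩ := Finset.exists_min_image {w ∈ s | y < w} id
    ⟨v, Finset.mem_filter.2 ⟨hv, hyv⟩⟩
  simp only [Finset.mem_filter, id] at hx hz hx_max hz_min
  refine ⟨x, z, mem_gaps.2 ⟨hx.1, hz.1, hx.2.trans hz.2, fun w hw => ?_⟩, hx.2, hz.2⟩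
  rcases lt_trichotomy w y with hwy | rfl | hyw
  exacts [.inl (hx_max w ⟨hw, hwy⟩), absurd hw hy, .inr (hz_min w ⟨hw, hyw⟩)]

lemma le_left_of_mem_gaps {w : α} (h : (x, z) ∈ gaps s) (hw : w ∈ s) (hwz : w < z) : w ≤ x :=
  ((mem_gaps.1 h).2.2.2 w hw).resolve_right hwz.not_ge

lemma right_le_of_mem_gaps {w : α} (h : (x, z) ∈ gaps s) (hw : w ∈ s) (hxw : x < w) : z ≤ w :=
  ((mem_gaps.1 h).2.2.2 w hw).resolve_left hxw.not_ge

lemma gaps_insert (hxz : (x, z) ∈ gaps s) (hxy : x < y) (hyz : y < z) :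
    gaps (insert y s) = insert (x, y) (insert (y, z) ((gaps s).erase (x, z))) := by
  rw [mem_gaps] at hxz
  ext ⟨u, v⟩
  rw [mem_gaps, Finset.forall_mem_insert]
  simp only [Finset.mem_insert, Finset.mem_erase, mem_gaps, Prod.mk.injEq, ne_eq]
  grind

lemma gaps_pair (hxy : x < y) : gaps {x, y} = {(x, y)} := by
  ext ⟨u, v⟩
  simp only [mem_gaps, Finset.mem_insert, Finset.mem_singleton, Prod.mk.injEq]
  grind

lemma gaps_image {n : ℕ} {t : Fin (n + 1) → α} (ht : StrictMono t) :
    gaps (Finset.univ.image t) = Finset.univ.image fun i : Fin n => (t i.castSucc, t i.succ) := by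
  ext ⟨u, v⟩
  simp only [mem_gaps, Finset.mem_image, Finset.mem_univ, true_and, Prod.mk.injEq]
  constructor
  · rintro ⟨⟨i, rfl⟩, ⟨j, rfl⟩, hij, hgap⟩
    have hij : i < j := ht.lt_iff_lt.1 hij
    obtain ⟨k, rfl⟩ : ∃ k : Fin n, k.castSucc = i :=
      ⟨i.castPred (hij.trans_le j.le_last).ne, Fin.castSucc_castPred _ _⟩
    refine ⟨k, rfl, le_antisymm (ht.monotone (Fin.castSucc_lt_iff_succ_le.1 hij)) ?_⟩
    exact (hgap _ ⟨k.succ, rfl⟩).resolve_left (ht k.castSucc_lt_succ).not_ge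
  · rintro ⟨k, rfl, rfl⟩
    refine ⟨⟨_, rfl⟩, ⟨_, rfl⟩, ht k.castSucc_lt_succ, ?_⟩
    rintro _ ⟨j, rfl⟩
    exact (le_or_gt j k.castSucc).imp (fun h => ht.monotone h)
      fun h => ht.monotone (Fin.castSucc_lt_iff_succ_le.1 h)

lemma sum_gaps_image {M : Type*} [AddCommMonoid M] {n : ℕ} {t : Fin (n + 1) → α}
    (ht : StrictMono t) (h : α × α → M) :
    ∑ c ∈ gaps (Finset.univ.image t), h c = ∑ i : Fin n, h (t i.castSucc, t i.succ) := by
  rw [gaps_image ht, Finset.sum_image]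
  intro i _ j _ hij
  exact Fin.castSucc_injective n (ht.injective (congrArg Prod.fst hij))

/-- The Riemann–Stieltjes sum of `f` against `g` over the partition with nodes `s`, tagged at the
left end of each cell. -/
def leftSum (f g : α → R) (s : Finset α) : R :=
  ∑ c ∈ gaps s, f c.1 * (g c.2 - g c.1)

lemma leftSum_pair (f g : α → R) (hxy : x < y) : leftSum f g {x, y} = f x * (g y - g x) := by
  rw [leftSum, gaps_pair hxy, Finset.sum_singleton]

lemma leftSum_image (f g : α → R) {n : ℕ} {t : Fin (n + 1) → α} (ht : StrictMono t) :
    leftSum f g (Finset.univ.image t) =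
      ∑ i : Fin n, f (t i.castSucc) * (g (t i.succ) - g (t i.castSucc)) :=
  sum_gaps_image ht _

lemma leftSum_insert (f g : α → R) (hxz : (x, z) ∈ gaps s) (hxy : x < y) (hyz : y < z) :
    leftSum f g (insert y s) = leftSum f g s + (f y - f x) * (g z - g y) := by
  have hy : y ∉ s := fun hy => hxy.not_ge (le_left_of_mem_gaps hxz hy hyz)
  have hxy_notMem : (x, y) ∉ insert (y, z) ((gaps s).erase (x, z)) := by
    simp [mem_gaps, hy, hxy.ne]
  have hyz_notMem : (y, z) ∉ (gaps s).erase (x, z) := by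
    simp [mem_gaps, hy]
  rw [leftSum, gaps_insert hxz hxy hyz, Finset.sum_insert hxy_notMem,
    Finset.sum_insert hyz_notMem, leftSum, ← Finset.sum_erase_add _ _ hxz]
  noncomm_ring

end Gaps

section PVariation

variable {f : ℝ → ℝ} {p a b : ℝ}

lemma pVarNorm_nonneg : 0 ≤ pVarNorm f p a b :=
  Real.rpow_nonneg ENNReal.toReal_nonneg _

lemma pVarNorm_rpow (hp : p ≠ 0) : pVarNorm f p a b ^ p = (pVar f p a b).toReal := by
  rw [pVarNorm, one_div, Real.rpow_inv_rpow ENNReal.toReal_nonneg hp]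

lemma sum_gaps_rpow_le_pVarNorm_rpow (hp : p ≠ 0) (hf : pVar f p a b < ⊤) {Q : Finset ℝ}
    (hQ : ↑Q ⊆ Icc a b) : ∑ c ∈ gaps Q, |f c.2 - f c.1| ^ p ≤ pVarNorm f p a b ^ p := by
  rw [pVarNorm_rpow hp]
  obtain rfl | hne := Q.eq_empty_or_nonempty
  · exact ENNReal.toReal_nonneg
  obtain ⟨n, hn⟩ := Nat.exists_eq_succ_of_ne_zero hne.card_ne_zero
  let t := Q.orderEmbOfFin hn
  have ht_image : Finset.univ.image t = Q := Q.image_orderEmbOfFin_univ hn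
  rw [← ENNReal.ofReal_le_iff_le_toReal hf.ne, ← ht_image, sum_gaps_image t.strictMono,
    ENNReal.ofReal_sum_of_nonneg fun _ _ => by positivity]
  exact le_iSup₂_of_le n t <| le_iSup₂_of_le t.strictMono
    (fun i => hQ (Q.orderEmbOfFin_mem hn i)) le_rfl

lemma sum_rpow_le_pVarNorm_rpow_of_nonoverlapping {ι : Type*} {s : Finset ι} {x y : ι → ℝ}
    (hp : p ≠ 0) (hf : pVar f p a b < ⊤) (hx : ∀ i ∈ s, x i ∈ Icc a b)
    (hy : ∀ i ∈ s, y i ∈ Icc a b) (hxy : ∀ i ∈ s, x i ≤ y i)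
    (hs : (s : Set ι).Pairwise fun i j => y i ≤ x j ∨ y j ≤ x i) :
    ∑ i ∈ s, |f (y i) - f (x i)| ^ p ≤ pVarNorm f p a b ^ p := by
  let s' := {i ∈ s | x i < y i}
  let Q := s'.image x ∪ s'.image y
  have hQ : ↑Q ⊆ Icc a b := by
    simp only [Q, s', Finset.coe_union, Finset.coe_image, Finset.coe_filter]
    grind
  have hgap : ∀ i ∈ s', (x i, y i) ∈ gaps Q := by
    intro i hi
    have hi_lt : x i < y i := (Finset.mem_filter.1 hi).2
    refine mem_gaps.2 ⟨Finset.mem_union_left _ (Finset.mem_image_of_mem x hi),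
      Finset.mem_union_right _ (Finset.mem_image_of_mem y hi), hi_lt, fun w hw => ?_⟩
    obtain ⟨j, hj, hw⟩ : ∃ j ∈ s', w = x j ∨ w = y j := by
      simp only [Q, Finset.mem_union, Finset.mem_image] at hw
      grind
    have hj_lt : x j < y j := (Finset.mem_filter.1 hj).2
    have hij : i ≠ j → y i ≤ x j ∨ y j ≤ x i :=
      hs (Finset.filter_subset _ _ hi) (Finset.filter_subset _ _ hj)
    grind
  have hinj : Set.InjOn (fun i => (x i, y i)) s' := by
    intro i hi j hj hij
    by_contra hne
    have hlt : x i < y i := (Finset.mem_filter.1 hi).2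
    have := hs (Finset.filter_subset _ _ hi) (Finset.filter_subset _ _ hj) hne
    grind
  calc ∑ i ∈ s, |f (y i) - f (x i)| ^ p
      = ∑ i ∈ s', |f (y i) - f (x i)| ^ p := by
        refine (Finset.sum_filter_of_ne fun i hi hne => (hxy i hi).lt_of_ne fun h => hne ?_).symm
        rw [h, sub_self, abs_zero, Real.zero_rpow hp]
    _ = ∑ c ∈ s'.image fun i => (x i, y i), |f c.2 - f c.1| ^ p :=
        by rw [Finset.sum_image hinj]
    _ ≤ ∑ c ∈ gaps Q, |f c.2 - f c.1| ^ p :=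
        Finset.sum_le_sum_of_subset_of_nonneg (Finset.image_subset_iff.2 hgap)
          fun _ _ _ => by positivity
    _ ≤ pVarNorm f p a b ^ p := sum_gaps_rpow_le_pVarNorm_rpow hp hf hQ

lemma abs_sub_le_pVarNorm (hp : 0 < p) (hf : pVar f p a b < ⊤) {x y : ℝ} (hx : x ∈ Icc a b)
    (hy : y ∈ Icc a b) : |f y - f x| ≤ pVarNorm f p a b := by
  wlog hxy : x ≤ y generalizing x y
  · rw [abs_sub_comm]
    exact this hy hx (le_of_not_ge hxy)
  have h := sum_rpow_le_pVarNorm_rpow_of_nonoverlapping (s := {()}) (x := fun _ => x)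
    (y := fun _ => y) hp.ne' hf (by simpa using hx) (by simpa using hy) (by simpa using hxy)
    (by simp)
  rw [Finset.sum_singleton] at h
  exact (Real.rpow_le_rpow_iff (abs_nonneg _) pVarNorm_nonneg hp).1 h

/-- The oscillation of `f` on `[u; v]` is at most `ω`. -/
def OscLE (f : ℝ → ℝ) (ω u v : ℝ) : Prop :=
  ∀ x ∈ Icc u v, ∀ y ∈ Icc u v, |f y - f x| ≤ ω

lemma OscLE.mono {ω u v u' v' : ℝ} (h : OscLE f ω u v) (hu : u ≤ u') (hv : v' ≤ v) :
    OscLE f ω u' v' :=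
  fun x hx y hy => h x (Icc_subset_Icc hu hv hx) y (Icc_subset_Icc hu hv hy)

lemma oscNorm_nonneg : 0 ≤ oscNorm f a b :=
  Real.sSup_nonneg <| by
    rintro _ ⟨x, -, y, -, -, rfl⟩
    exact abs_nonneg _

lemma oscLE_oscNorm (hp : 0 < p) (hf : pVar f p a b < ⊤) : OscLE f (oscNorm f a b) a b := by
  intro x hx y hy
  wlog hxy : x ≤ y generalizing x y
  · rw [abs_sub_comm]
    exact this y hy x hx (le_of_not_ge hxy)
  obtain rfl | hlt := hxy.eq_or_lt
  · rw [sub_self, abs_zero]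
    exact oscNorm_nonneg
  have hbdd : BddAbove {d | ∃ s ∈ Icc a b, ∃ t ∈ Icc a b, s < t ∧ d = |f t - f s|} := by
    refine ⟨pVarNorm f p a b, ?_⟩
    rintro _ ⟨s, hs, t, ht, -, rfl⟩
    exact abs_sub_le_pVarNorm hp hf hs ht
  exact le_csSup hbdd ⟨x, hx, y, hy, hlt, rfl⟩

end PVariation

lemma sum_range_le_integral_Ioi {h : ℝ → ℝ} (h_anti : AntitoneOn h (Ioi 0))
    (h_nonneg : ∀ u ∈ Ioi (0 : ℝ), 0 ≤ h u) (h_int : IntegrableOn h (Ioi 0)) (n : ℕ) :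
    ∑ r ∈ Finset.range n, h ((r + 1 : ℕ) : ℝ) ≤ ∫ u in Ioi 0, h u := by
  have h_intervalIntegrable (x y : ℝ) (hx : 0 ≤ x) (hxy : x ≤ y) :
      IntervalIntegrable h volume x y :=
    (intervalIntegrable_iff_integrableOn_Ioc_of_le hxy).2
      (h_int.mono_set (Ioc_subset_Ioi_self.trans (Ioi_subset_Ioi hx)))
  have h_step (r : ℕ) : h ((r + 1 : ℕ) : ℝ) ≤ ∫ u in (r : ℝ)..(r + 1 : ℕ), h u := by
    have hr : (r : ℝ) ≤ (r + 1 : ℕ) := by exact_mod_cast r.le_succ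
    calc h ((r + 1 : ℕ) : ℝ) = ∫ _ in (r : ℝ)..(r + 1 : ℕ), h ((r + 1 : ℕ) : ℝ) := by simp
      _ ≤ ∫ u in (r : ℝ)..(r + 1 : ℕ), h u :=
        intervalIntegral.integral_mono_on_of_le_Ioo hr intervalIntegrable_const
          (h_intervalIntegrable _ _ r.cast_nonneg hr) fun u hu =>
            h_anti (r.cast_nonneg.trans_lt hu.1) (by positivity : (0 : ℝ) < (r + 1 : ℕ)) hu.2.le
  calc ∑ r ∈ Finset.range n, h ((r + 1 : ℕ) : ℝ)
      ≤ ∑ r ∈ Finset.range n, ∫ u in (r : ℝ)..(r + 1 : ℕ), h u :=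
        Finset.sum_le_sum fun r _ => h_step r
    _ = ∫ u in (0 : ℝ)..n, h u := by
        rw [intervalIntegral.sum_integral_adjacent_intervals (a := fun r : ℕ => (r : ℝ)) fun r _ =>
          h_intervalIntegrable _ _ r.cast_nonneg (by exact_mod_cast r.le_succ), Nat.cast_zero]
    _ = ∫ u in Ioc (0 : ℝ) n, h u := intervalIntegral.integral_of_le n.cast_nonneg
    _ ≤ ∫ u in Ioi 0, h u :=
        setIntegral_mono_set h_int ((ae_restrict_iff' measurableSet_Ioi).2 (.of_forall h_nonneg))
          Ioc_subset_Ioi_self.eventuallyLE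

section YoungKernel

variable {p q : ℝ}

/-- The function `min (1, u^{-1/p}) u^{-1/q}`, which majorizes, up to scaling, the product of
increments lost when the `N`-th node is deleted. -/
noncomputable def youngKernel (p q u : ℝ) : ℝ :=
  min 1 (u ^ (-p⁻¹)) * u ^ (-q⁻¹)

lemma youngKernel_nonneg {u : ℝ} (hu : 0 ≤ u) : 0 ≤ youngKernel p q u := by
  unfold youngKernel
  positivity

lemma antitoneOn_youngKernel (hp : 0 < p) (hq : 0 < q) :
    AntitoneOn (youngKernel p q) (Ioi 0) := by
  have h_rpow (r : ℝ) (hr : 0 < r) : AntitoneOn (fun u : ℝ => u ^ (-r⁻¹)) (Ioi 0) :=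
    Real.antitoneOn_rpow_Ioi_of_exponent_nonpos (neg_nonpos.2 (inv_nonneg.2 hr.le))
  intro u hu v hv huv
  have hu' : 0 < u := hu
  have hv' : 0 < v := hv
  exact mul_le_mul (min_le_min_left 1 (h_rpow p hp hu hv huv)) (h_rpow q hq hu hv huv)
    (by positivity) (by positivity)

lemma integrableOn_youngKernel (hp : 0 < p) (hq : 1 < q) (hpq : 1 < 1 / p + 1 / q) :
    IntegrableOn (youngKernel p q) (Ioi 0) := by
  have h_near : IntegrableOn (youngKernel p q) (Ioc 0 1) := by
    refine IntegrableOn.congr_fun (f := fun u => u ^ (-q⁻¹)) ?_ (fun u hu => ?_)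
      measurableSet_Ioc
    · rw [← intervalIntegrable_iff_integrableOn_Ioc_of_le zero_le_one]
      exact intervalIntegral.intervalIntegrable_rpow' (neg_lt_neg (inv_lt_one_of_one_lt₀ hq))
    · have : 1 ≤ u ^ (-p⁻¹) :=
        Real.one_le_rpow_of_pos_of_le_one_of_nonpos hu.1 hu.2 (by simpa using hp.le)
      simp only [youngKernel, min_eq_left this, one_mul]
  have h_far : IntegrableOn (youngKernel p q) (Ioi 1) := by
    refine IntegrableOn.congr_fun (f := fun u => u ^ (-p⁻¹ + -q⁻¹)) ?_ (fun u hu => ?_)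
      measurableSet_Ioi
    · simp only [one_div] at hpq
      exact integrableOn_Ioi_rpow_of_lt (by linarith) zero_lt_one
    · have hu' : (1 : ℝ) < u := hu
      have : u ^ (-p⁻¹) ≤ 1 :=
        Real.rpow_le_one_of_one_le_of_nonpos hu'.le (by simpa using hp.le)
      simp only [youngKernel, min_eq_right this, Real.rpow_add (zero_lt_one.trans hu')]
  rw [← Ioc_union_Ioi_eq_Ioi zero_le_one]
  exact h_near.union h_far

/-- The constant in the improved Loéve–Young inequality. -/
noncomputable def youngConst (p q : ℝ) : ℝ :=
  2 * ∫ u in Ioi 0, youngKernel p q u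

lemma youngConst_pos (hp : 0 < p) (hq : 1 < q) (hpq : 1 < 1 / p + 1 / q) :
    0 < youngConst p q := by
  have h := sum_range_le_integral_Ioi (antitoneOn_youngKernel hp (zero_lt_one.trans hq))
    (fun _ hu => youngKernel_nonneg (le_of_lt hu)) (integrableOn_youngKernel hp hq hpq) 1
  have h_one : youngKernel p q 1 = 1 := by simp [youngKernel]
  rw [Finset.sum_range_one, Nat.zero_add, Nat.cast_one, h_one] at h
  exact mul_pos two_pos (zero_lt_one.trans_le h)

lemma sum_youngKernel_le (hp : 0 < p) (hq : 1 < q) (hpq : 1 < 1 / p + 1 / q) {c : ℝ} (hc : 0 < c)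
    (n : ℕ) :
    ∑ r ∈ Finset.range n, youngKernel p q (c * (r + 1 : ℕ)) ≤ c⁻¹ * (youngConst p q / 2) := by
  have hmem {u : ℝ} (hu : u ∈ Ioi 0) : c * u ∈ Ioi 0 := mul_pos hc hu
  have h_int : IntegrableOn (fun u => youngKernel p q (c * u)) (Ioi 0) := by
    rw [integrableOn_Ioi_comp_mul_left_iff _ _ hc, mul_zero]
    exact integrableOn_youngKernel hp hq hpq
  calc ∑ r ∈ Finset.range n, youngKernel p q (c * (r + 1 : ℕ))
      ≤ ∫ u in Ioi 0, youngKernel p q (c * u) :=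
        sum_range_le_integral_Ioi (h := fun u => youngKernel p q (c * u))
          (fun u hu v hv huv => antitoneOn_youngKernel hp (zero_lt_one.trans hq) (hmem hu) (hmem hv)
            (mul_le_mul_of_nonneg_left huv hc.le))
          (fun u hu => youngKernel_nonneg (le_of_lt (hmem hu))) h_int n
    _ = c⁻¹ * ∫ u in Ioi 0, youngKernel p q u := by
        rw [integral_comp_mul_left_Ioi _ _ hc, mul_zero, smul_eq_mul]
    _ = c⁻¹ * (youngConst p q / 2) := by
        rw [youngConst, mul_div_cancel_left₀ _ two_ne_zero]

end YoungKernel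

section YoungBound

variable {p q A B ω : ℝ}

/-- The bound for the change of a Riemann–Stieltjes sum when one node out of `N` is deleted, `A` and
`B` being the variation norms of the two factors and `ω` the oscillation of the first. -/
noncomputable def youngTerm (p q A B ω N : ℝ) : ℝ :=
  min ω (A * (2 / N) ^ p⁻¹) * (B * (2 / N) ^ q⁻¹)

/-- The right-hand side of the improved Loéve–Young inequality, `A` and `B` being the variation
norms of the two factors and `ω` the oscillation of the first. -/
noncomputable def youngBound (p q A B ω : ℝ) : ℝ :=
  youngConst p q * A ^ (p - p / q) * ω ^ (1 + p / q - p) * B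

lemma youngTerm_eq_mul_youngKernel (hp : 0 < p) (hA : 0 < A) (hω : 0 < ω) {N : ℝ} (hN : 0 < N) :
    youngTerm p q A B ω N =
      ω * (ω / A) ^ (p / q) * B * youngKernel p q ((ω / A) ^ p / 2 * N) := by
  have h_rpow (r : ℝ) :
      ((ω / A) ^ p / 2 * N) ^ (-r⁻¹) = ((ω / A) ^ (p / r))⁻¹ * (2 / N) ^ r⁻¹ := by
    rw [show (ω / A) ^ p / 2 * N = (ω / A) ^ p * (2 / N)⁻¹ by field_simp,
      Real.mul_rpow (by positivity) (by positivity), ← Real.rpow_mul (by positivity),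
      Real.inv_rpow (by positivity), Real.rpow_neg (by positivity : (0 : ℝ) ≤ 2 / N), inv_inv,
      mul_neg, Real.rpow_neg (by positivity), div_eq_mul_inv p r]
  have h_min : min ω (A * (2 / N) ^ p⁻¹) = ω * min 1 ((ω / A)⁻¹ * (2 / N) ^ p⁻¹) := by
    rw [mul_min_of_nonneg _ _ hω.le, mul_one]
    field_simp
  have : 0 < (ω / A) ^ (p / q) := by positivity
  rw [youngTerm, youngKernel, h_rpow, h_rpow, div_self hp.ne', Real.rpow_one, h_min]
  field_simp

lemma sum_youngTerm_le (hp : 0 < p) (hq : 1 < q) (hpq : 1 < 1 / p + 1 / q) (hA : 0 ≤ A)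
    (hB : 0 ≤ B) (hω : 0 ≤ ω) (n : ℕ) :
    ∑ r ∈ Finset.range n, youngTerm p q A B ω (r + 1 : ℕ) ≤ youngBound p q A B ω := by
  have h_const := (youngConst_pos hp hq hpq).le
  have h_degenerate (h : ∀ N : ℕ, youngTerm p q A B ω N = 0) :
      ∑ r ∈ Finset.range n, youngTerm p q A B ω (r + 1 : ℕ) ≤ youngBound p q A B ω := by
    rw [Finset.sum_eq_zero fun r _ => h (r + 1), youngBound]
    positivity
  obtain rfl | hω := hω.eq_or_lt
  · exact h_degenerate fun N => by
      rw [youngTerm, min_eq_left (by positivity), zero_mul]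
  obtain rfl | hA := hA.eq_or_lt
  · exact h_degenerate fun N => by
      rw [youngTerm, zero_mul, min_eq_right hω.le, zero_mul]
  calc ∑ r ∈ Finset.range n, youngTerm p q A B ω (r + 1 : ℕ)
      = ω * (ω / A) ^ (p / q) * B *
          ∑ r ∈ Finset.range n, youngKernel p q ((ω / A) ^ p / 2 * (r + 1 : ℕ)) := by
        rw [Finset.mul_sum]
        exact Finset.sum_congr rfl fun r _ =>
          youngTerm_eq_mul_youngKernel hp hA hω (by positivity)
    _ ≤ ω * (ω / A) ^ (p / q) * B * (((ω / A) ^ p / 2)⁻¹ * (youngConst p q / 2)) := by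
        gcongr
        exact sum_youngKernel_le hp hq hpq (by positivity) n
    _ = youngBound p q A B ω := by
        rw [youngBound, Real.rpow_sub hA, Real.rpow_sub hω, Real.rpow_add hω, Real.rpow_one,
          Real.div_rpow hω.le hA.le, Real.div_rpow hω.le hA.le]
        field_simp

lemma one_add_div_sub_pos (hp : 0 < p) (hpq : 1 < 1 / p + 1 / q) : 0 < 1 + p / q - p := by
  have h := mul_lt_mul_of_pos_left hpq hp
  rw [mul_one, mul_add, mul_one_div_cancel hp.ne', mul_one_div] at h
  linarith

lemma youngBound_zero (hp : 0 < p) (hpq : 1 < 1 / p + 1 / q) : youngBound p q A B 0 = 0 := by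
  rw [youngBound, Real.zero_rpow (one_add_div_sub_pos hp hpq).ne', mul_zero, zero_mul]

lemma continuous_youngBound (hp : 0 < p) (hpq : 1 < 1 / p + 1 / q) :
    Continuous (youngBound p q A B) :=
  (continuous_const.mul (Real.continuous_rpow_const (one_add_div_sub_pos hp hpq).le)).mul
    continuous_const

end YoungBound

section Deletion

variable {ι : Type*} {s : Finset ι}

lemma two_mul_card_filter_lt (hs : s.Nonempty) {u : ι → ℝ} {U : ℝ} (hu : ∀ i ∈ s, 0 ≤ u i)
    (hU : ∑ i ∈ s, u i ≤ U) : 2 * ({i ∈ s | U * (2 / s.card) < u i} : Finset ι).card < s.card := by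
  set large : Finset ι := {i ∈ s | U * (2 / s.card) < u i}
  have hs_pos : (0 : ℝ) < s.card := by exact_mod_cast hs.card_pos
  obtain h_empty | h_nonempty := large.eq_empty_or_nonempty
  · simpa [h_empty] using hs
  have h_lt : large.card * (U * (2 / s.card)) < U :=
    calc large.card * (U * (2 / s.card)) = ∑ _ ∈ large, U * (2 / s.card) := by
          rw [Finset.sum_const, nsmul_eq_mul]
      _ < ∑ i ∈ large, u i :=
          Finset.sum_lt_sum_of_nonempty h_nonempty fun i hi => (Finset.mem_filter.1 hi).2
      _ ≤ ∑ i ∈ s, u i :=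
          Finset.sum_le_sum_of_subset_of_nonneg (Finset.filter_subset _ _) fun i hi _ => hu i hi
      _ ≤ U := hU
  have hU_nonneg : 0 ≤ U := (Finset.sum_nonneg hu).trans hU
  by_contra! h
  have h_cast : (s.card : ℝ) ≤ 2 * large.card := by exact_mod_cast h
  refine h_lt.not_ge ?_
  calc U = U * (s.card / s.card) := by rw [div_self hs_pos.ne', mul_one]
    _ ≤ U * (2 * large.card / s.card) := by gcongr
    _ = large.card * (U * (2 / s.card)) := by ring

variable {p q A B ωf ωg : ℝ}

lemma abs_le_mul_rpow_inv (hp : 0 < p) (hA : 0 ≤ A) {x m : ℝ} (hm : 0 ≤ m)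
    (h : |x| ^ p ≤ A ^ p * m) : |x| ≤ A * m ^ p⁻¹ := by
  refine (Real.rpow_le_rpow_iff (abs_nonneg x) (by positivity) hp).1 (h.trans_eq ?_)
  rw [Real.mul_rpow hA (by positivity), Real.rpow_inv_rpow hm hp.ne']

lemma youngTerm_nonneg (hA : 0 ≤ A) (hB : 0 ≤ B) {ω N : ℝ} (hω : 0 ≤ ω) (hN : 0 ≤ N) :
    0 ≤ youngTerm p q A B ω N := by
  unfold youngTerm
  positivity

lemma exists_abs_mul_le_youngTerm_add (hp : 0 < p) (hq : 0 < q) (hA : 0 ≤ A) (hB : 0 ≤ B)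
    (hωf : 0 ≤ ωf) (hωg : 0 ≤ ωg) (hs : s.Nonempty) {a b : ι → ℝ}
    (ha : ∑ i ∈ s, |a i| ^ p ≤ A ^ p) (hb : ∑ i ∈ s, |b i| ^ q ≤ B ^ q)
    (h_osc : ∀ i ∈ s, |a i| ≤ ωf ∨ |b i| ≤ ωg) :
    ∃ i ∈ s, |a i * b i| ≤ youngTerm p q A B ωf s.card + youngTerm q p B A ωg s.card := by
  -- Fewer than half of the indices have a large `a i`, fewer than half a large `b i`.
  have ha_card := two_mul_card_filter_lt hs (fun i _ => by positivity) ha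
  have hb_card := two_mul_card_filter_lt hs (fun i _ => by positivity) hb
  obtain ⟨i, his, hi⟩ : ∃ i ∈ s,
      ¬(A ^ p * (2 / s.card) < |a i| ^ p ∨ B ^ q * (2 / s.card) < |b i| ^ q) := by
    classical
    by_contra! h
    have := Finset.filter_or (fun i => A ^ p * (2 / s.card) < |a i| ^ p)
      (fun i => B ^ q * (2 / s.card) < |b i| ^ q) s
    rw [Finset.filter_true_of_mem h] at this
    have := (congrArg Finset.card this).trans_le (Finset.card_union_le _ _)
    lia
  rw [not_or, not_lt, not_lt] at hi
  have hai := abs_le_mul_rpow_inv hp hA (by positivity) hi.1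
  have hbi := abs_le_mul_rpow_inv hq hB (by positivity) hi.2
  have hf_nonneg : 0 ≤ youngTerm p q A B ωf s.card :=
    youngTerm_nonneg hA hB hωf s.card.cast_nonneg
  have hg_nonneg : 0 ≤ youngTerm q p B A ωg s.card :=
    youngTerm_nonneg hB hA hωg s.card.cast_nonneg
  refine ⟨i, his, ?_⟩
  rw [abs_mul]
  rcases h_osc i his with h | h
  · exact (mul_le_mul (le_min h hai) hbi (abs_nonneg _) (by positivity)).trans
      (le_add_of_nonneg_right hg_nonneg)
  · rw [mul_comm]
    exact (mul_le_mul (le_min h hbi) hai (abs_nonneg _) (by positivity)).trans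
      (le_add_of_nonneg_left hf_nonneg)

variable [DecidableEq ι] {Φ : Finset ι → ℝ} {S : Finset ι}

lemma abs_sub_empty_le_sum_range {β : ℕ → ℝ}
    (h : ∀ s ⊆ S, s.Nonempty → ∃ i ∈ s, |Φ s - Φ (s.erase i)| ≤ β s.card) :
    |Φ S - Φ ∅| ≤ ∑ r ∈ Finset.range S.card, β (r + 1) := by
  induction hn : S.card generalizing S with
  | zero => simp [Finset.card_eq_zero.1 hn]
  | succ n ih =>
    obtain ⟨i, hi, h_delete⟩ := h S subset_rfl (Finset.card_pos.1 (by lia))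
    have h_rest := ih (S := S.erase i) (fun s hs => h s (hs.trans (S.erase_subset i)))
      (by rw [Finset.card_erase_of_mem hi, hn, Nat.add_sub_cancel])
    rw [Finset.sum_range_succ, add_comm, ← hn]
    exact (abs_sub_le _ (Φ (S.erase i)) _).trans (add_le_add h_delete h_rest)

lemma abs_sub_empty_le_youngBound_add (hp : 1 < p) (hq : 1 < q) (hpq : 1 < 1 / p + 1 / q)
    (hA : 0 ≤ A) (hB : 0 ≤ B) (hωf : 0 ≤ ωf) (hωg : 0 ≤ ωg)
    (h : ∀ s ⊆ S, ∃ a b : ι → ℝ, ∑ i ∈ s, |a i| ^ p ≤ A ^ p ∧ ∑ i ∈ s, |b i| ^ q ≤ B ^ q ∧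
      ∀ i ∈ s, Φ s - Φ (s.erase i) = a i * b i ∧ (|a i| ≤ ωf ∨ |b i| ≤ ωg)) :
    |Φ S - Φ ∅| ≤ youngBound p q A B ωf + youngBound q p B A ωg := by
  have hp' : 0 < p := zero_lt_one.trans hp
  have hq' : 0 < q := zero_lt_one.trans hq
  have h_greedy : ∀ s ⊆ S, s.Nonempty → ∃ i ∈ s, |Φ s - Φ (s.erase i)| ≤
      youngTerm p q A B ωf s.card + youngTerm q p B A ωg s.card := by
    intro s hsS hs
    obtain ⟨a, b, ha, hb, hab⟩ := h s hsS
    obtain ⟨i, hi, h_le⟩ := exists_abs_mul_le_youngTerm_add hp' hq' hA hB hωf hωg hs ha hb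
      fun i hi => (hab i hi).2
    exact ⟨i, hi, by rwa [(hab i hi).1]⟩
  calc |Φ S - Φ ∅|
      ≤ ∑ r ∈ Finset.range S.card,
          (youngTerm p q A B ωf (r + 1 : ℕ) + youngTerm q p B A ωg (r + 1 : ℕ)) :=
        abs_sub_empty_le_sum_range
          (β := fun N => youngTerm p q A B ωf N + youngTerm q p B A ωg N) h_greedy
    _ ≤ youngBound p q A B ωf + youngBound q p B A ωg := by
        rw [Finset.sum_add_distrib]
        exact add_le_add (sum_youngTerm_le hp' hq hpq hA hB hωf _)
          (sum_youngTerm_le hq' hp (by rwa [add_comm]) hB hA hωg _)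

end Deletion

section Refinement

/-- `P` is the set of nodes of a partition of `[a; b]`. -/
structure IsPartition (P : Finset ℝ) (a b : ℝ) : Prop where
  subset_Icc : ↑P ⊆ Icc a b
  left_mem : a ∈ P
  right_mem : b ∈ P

variable {f g : ℝ → ℝ} {p q a b ωf ωg : ℝ} {P Q : Finset ℝ}

lemma IsPartition.pair (hab : a ≤ b) : IsPartition {a, b} a b where
  subset_Icc := by simp [insert_subset_iff, hab]
  left_mem := by simp
  right_mem := by simp

lemma IsPartition.union (hP : IsPartition P a b) (hQ : IsPartition Q a b) :
    IsPartition (P ∪ Q) a b where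
  subset_Icc := by
    rw [Finset.coe_union]
    exact union_subset hP.subset_Icc hQ.subset_Icc
  left_mem := Finset.mem_union_left _ hP.left_mem
  right_mem := Finset.mem_union_left _ hP.right_mem

lemma IsPartition.exists_mem_gaps (hP : IsPartition P a b) {y : ℝ} (hy : y ∈ Icc a b)
    (hyP : y ∉ P) : ∃ x z, (x, z) ∈ gaps P ∧ x < y ∧ y < z :=
  exists_mem_gaps_of_notMem hP.left_mem (hy.1.lt_of_ne fun h => hyP (h ▸ hP.left_mem))
    hP.right_mem (hy.2.lt_of_ne fun h => hyP (h ▸ hP.right_mem)) hyP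

lemma IsPartition.exists_gaps_erase (hP : IsPartition P a b) {T : Finset ℝ} (hPT : P ⊆ T)
    (hT : ↑T ⊆ Icc a b) :
    ∃ x z : ℝ → ℝ, ∀ y ∈ T \ P, (x y, z y) ∈ gaps (T.erase y) ∧ x y < y ∧ y < z y ∧
      ∃ c ∈ gaps P, c.1 ≤ x y ∧ z y ≤ c.2 := by
  have h : ∀ y ∈ T \ P, ∃ x z, (x, z) ∈ gaps (T.erase y) ∧ x < y ∧ y < z ∧
      ∃ c ∈ gaps P, c.1 ≤ x ∧ z ≤ c.2 := by
    intro y hy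
    obtain ⟨hyT, hyP⟩ := Finset.mem_sdiff.1 hy
    obtain ⟨u, v, huv, huy, hyv⟩ := hP.exists_mem_gaps (hT hyT) hyP
    have hu : u ∈ T.erase y := Finset.mem_erase.2 ⟨huy.ne, hPT (mem_gaps.1 huv).1⟩
    have hv : v ∈ T.erase y := Finset.mem_erase.2 ⟨hyv.ne', hPT (mem_gaps.1 huv).2.1⟩
    obtain ⟨x, z, hxz, hxy, hyz⟩ :=
      exists_mem_gaps_of_notMem hu huy hv hyv (Finset.notMem_erase y T)
    exact ⟨x, z, hxz, hxy, hyz, (u, v), huv, le_left_of_mem_gaps hxz hu (huy.trans hyz),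
      right_le_of_mem_gaps hxz hv (hxy.trans hyv)⟩
  choose! x z h using h
  exact ⟨x, z, h⟩

lemma sum_rpow_left_increments_le (hp : p ≠ 0) (hf : pVar f p a b < ⊤) {s T : Finset ℝ}
    (hsT : s ⊆ T) (hT : ↑T ⊆ Icc a b) {x z : ℝ → ℝ}
    (hxz : ∀ y ∈ s, (x y, z y) ∈ gaps (T.erase y)) (hxy : ∀ y ∈ s, x y < y)
    (hyz : ∀ y ∈ s, y < z y) : ∑ y ∈ s, |f y - f (x y)| ^ p ≤ pVarNorm f p a b ^ p := by
  refine sum_rpow_le_pVarNorm_rpow_of_nonoverlapping hp hf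
    (fun y hy => hT (Finset.mem_of_mem_erase (mem_gaps.1 (hxz y hy)).1))
    (fun y hy => hT (hsT hy)) (fun y hy => (hxy y hy).le) fun y hy y' hy' hne => ?_
  have h_before {v w : ℝ} (hv : v ∈ s) (hw : w ∈ s) (hvw : v < w) : v ≤ x w :=
    le_left_of_mem_gaps (hxz w hw) (Finset.mem_erase.2 ⟨hvw.ne, hsT hv⟩) (hvw.trans (hyz w hw))
  exact hne.lt_or_gt.imp (h_before hy hy') (h_before hy' hy)

lemma sum_rpow_right_increments_le (hp : p ≠ 0) (hf : pVar f p a b < ⊤) {s T : Finset ℝ}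
    (hsT : s ⊆ T) (hT : ↑T ⊆ Icc a b) {x z : ℝ → ℝ}
    (hxz : ∀ y ∈ s, (x y, z y) ∈ gaps (T.erase y)) (hxy : ∀ y ∈ s, x y < y)
    (hyz : ∀ y ∈ s, y < z y) : ∑ y ∈ s, |f (z y) - f y| ^ p ≤ pVarNorm f p a b ^ p := by
  refine sum_rpow_le_pVarNorm_rpow_of_nonoverlapping hp hf (fun y hy => hT (hsT hy))
    (fun y hy => hT (Finset.mem_of_mem_erase (mem_gaps.1 (hxz y hy)).2.1))
    (fun y hy => (hyz y hy).le) fun y hy y' hy' hne => ?_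
  have h_after {v w : ℝ} (hv : v ∈ s) (hw : w ∈ s) (hvw : v < w) : z v ≤ w :=
    right_le_of_mem_gaps (hxz v hv) (Finset.mem_erase.2 ⟨hvw.ne', hsT hw⟩) ((hxy v hv).trans hvw)
  exact hne.lt_or_gt.imp (h_after hy hy') (h_after hy' hy)

lemma abs_leftSum_sub_leftSum_le (hp : 1 < p) (hq : 1 < q) (hpq : 1 < 1 / p + 1 / q)
    (hf : pVar f p a b < ⊤) (hg : pVar g q a b < ⊤) (hωf : 0 ≤ ωf) (hωg : 0 ≤ ωg)
    (hP : IsPartition P a b) (hQ : ↑Q ⊆ Icc a b) (hPQ : P ⊆ Q)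
    (h_osc : ∀ c ∈ gaps P, OscLE f ωf c.1 c.2 ∨ OscLE g ωg c.1 c.2) :
    |leftSum f g Q - leftSum f g P| ≤ youngBound p q (pVarNorm f p a b) (pVarNorm g q a b) ωf +
      youngBound q p (pVarNorm g q a b) (pVarNorm f p a b) ωg := by
  have h_delete : ∀ s ⊆ Q \ P, ∃ α β : ℝ → ℝ, ∑ y ∈ s, |α y| ^ p ≤ pVarNorm f p a b ^ p ∧
      ∑ y ∈ s, |β y| ^ q ≤ pVarNorm g q a b ^ q ∧ ∀ y ∈ s,
        leftSum f g (P ∪ s) - leftSum f g (P ∪ s.erase y) = α y * β y ∧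
          (|α y| ≤ ωf ∨ |β y| ≤ ωg) := by
    intro s hs
    have hs_disj : Disjoint s P := Finset.disjoint_of_subset_left hs Finset.sdiff_disjoint
    have h_sub : s ⊆ P ∪ s := Finset.subset_union_right
    have h_Icc : ↑(P ∪ s) ⊆ Icc a b := fun y hy =>
      hQ (Finset.union_subset hPQ (hs.trans Finset.sdiff_subset) hy)
    obtain ⟨x, z, hxz⟩ := hP.exists_gaps_erase Finset.subset_union_left h_Icc
    rw [Finset.union_sdiff_cancel_left hs_disj.symm] at hxz
    choose hxz hxy hyz h_cell using hxz
    refine ⟨fun y => f y - f (x y), fun y => g (z y) - g y,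
      sum_rpow_left_increments_le (by positivity) hf h_sub h_Icc hxz hxy hyz,
      sum_rpow_right_increments_le (by positivity) hg h_sub h_Icc hxz hxy hyz,
      fun y hy => ⟨?_, ?_⟩⟩
    · have h_erase : P ∪ s.erase y = (P ∪ s).erase y := by
        rw [Finset.erase_union_distrib,
          Finset.erase_eq_of_notMem (Finset.disjoint_left.1 hs_disj hy)]
      rw [h_erase, sub_eq_iff_eq_add', ← leftSum_insert f g (hxz y hy) (hxy y hy) (hyz y hy),
        Finset.insert_erase (h_sub hy)]
    · obtain ⟨c, hc, hc_left, hc_right⟩ := h_cell y hy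
      have hxy' := (hxy y hy).le
      have hyz' := (hyz y hy).le
      exact (h_osc c hc).imp
        (fun h => h.mono hc_left hc_right _ ⟨le_rfl, hxy'.trans hyz'⟩ _ ⟨hxy', hyz'⟩)
        (fun h => h.mono hc_left hc_right _ ⟨hxy', hyz'⟩ _ ⟨hxy'.trans hyz', le_rfl⟩)
  have := abs_sub_empty_le_youngBound_add (Φ := fun s => leftSum f g (P ∪ s)) hp hq hpq
    pVarNorm_nonneg pVarNorm_nonneg hωf hωg h_delete
  rwa [Finset.union_sdiff_of_subset hPQ, Finset.union_empty] at this

lemma abs_leftSum_sub_le (hp : 1 < p) (hq : 1 < q) (hpq : 1 < 1 / p + 1 / q) (hab : a < b)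
    (hf : pVar f p a b < ⊤) (hg : pVar g q a b < ⊤) (hQ : IsPartition Q a b) :
    |leftSum f g Q - f a * (g b - g a)| ≤
      youngBound p q (pVarNorm f p a b) (pVarNorm g q a b) (oscNorm f a b) := by
  have h := abs_leftSum_sub_leftSum_le hp hq hpq hf hg (oscNorm_nonneg (f := f)) le_rfl
    (.pair hab.le) hQ.subset_Icc (Finset.insert_subset hQ.left_mem <|
      Finset.singleton_subset_iff.2 hQ.right_mem) (by
      rw [gaps_pair hab]
      simpa using .inl (oscLE_oscNorm (zero_lt_one.trans hp) hf))
  rwa [leftSum_pair f g hab, youngBound_zero (zero_lt_one.trans hq) (by rwa [add_comm]),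
    add_zero] at h

end Refinement

section RiemannSums

variable {f g : ℝ → ℝ} {p q a b : ℝ}

/-- The tagged Riemann–Stieltjes sums for `∫_a^b f dg` over partitions of mesh less than `δ`. -/
def riemannSums (f g : ℝ → ℝ) (a b δ : ℝ) : Set ℝ :=
  {S | ∃ (n : ℕ) (t : Fin (n + 1) → ℝ) (ξ : Fin n → ℝ),
    StrictMono t ∧ t 0 = a ∧ t (Fin.last n) = b ∧
      (∀ i : Fin n, t i.castSucc ≤ ξ i ∧ ξ i ≤ t i.succ) ∧
      (∀ i : Fin n, t i.succ - t i.castSucc < δ) ∧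
      ∑ i : Fin n, f (ξ i) * (g (t i.succ) - g (t i.castSucc)) = S}

lemma riemannSums_mono {δ δ' : ℝ} (h : δ ≤ δ') :
    riemannSums f g a b δ ⊆ riemannSums f g a b δ' := by
  rintro S ⟨n, t, ξ, ht, hta, htb, hξ, h_mesh, hS⟩
  exact ⟨n, t, ξ, ht, hta, htb, hξ, fun i => (h_mesh i).trans_le h, hS⟩

lemma rsIntegral_iff {I : ℝ} :
    RSIntegral f g a b I ↔ ∀ ε > 0, ∃ δ > 0, ∀ S ∈ riemannSums f g a b δ, |S - I| < ε := by
  refine forall₂_congr fun ε _ => exists_congr fun δ => and_congr_right fun _ => ⟨?_, ?_⟩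
  · rintro h _ ⟨n, t, ξ, ht, hta, htb, hξ, h_mesh, rfl⟩
    exact h n t ξ ht hta htb hξ h_mesh
  · exact fun h n t ξ ht hta htb hξ h_mesh => h _ ⟨n, t, ξ, ht, hta, htb, hξ, h_mesh, rfl⟩

lemma isPartition_image {n : ℕ} {t : Fin (n + 1) → ℝ} (ht : StrictMono t) :
    IsPartition (Finset.univ.image t) (t 0) (t (Fin.last n)) where
  subset_Icc := by
    rw [Finset.coe_image, Finset.coe_univ, image_univ, range_subset_iff]
    exact fun i => ⟨ht.monotone i.zero_le, ht.monotone i.le_last⟩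
  left_mem := Finset.mem_image_of_mem t (Finset.mem_univ _)
  right_mem := Finset.mem_image_of_mem t (Finset.mem_univ _)

lemma exists_strictMono_mesh_lt {δ : ℝ} (hab : a < b) (hδ : 0 < δ) :
    ∃ (n : ℕ) (t : Fin (n + 1) → ℝ), StrictMono t ∧ t 0 = a ∧ t (Fin.last n) = b ∧
      ∀ i : Fin n, t i.succ - t i.castSucc < δ := by
  obtain ⟨n, hn⟩ := exists_nat_gt ((b - a) / δ)
  have hn_pos : (0 : ℝ) < n := (div_pos (sub_pos.2 hab) hδ).trans hn
  have h_step : 0 < (b - a) / n := div_pos (sub_pos.2 hab) hn_pos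
  refine ⟨n, fun i => a + i * ((b - a) / n), fun i j hij => ?_, ?_, ?_, fun i => ?_⟩
  · have : (i : ℝ) < j := by exact_mod_cast hij
    exact (add_lt_add_iff_left a).2 (mul_lt_mul_of_pos_right this h_step)
  · simp
  · change a + (Fin.last n : ℕ) * ((b - a) / n) = b
    rw [Fin.val_last, mul_div_cancel₀ _ hn_pos.ne', add_sub_cancel]
  · calc a + (i.succ : ℕ) * ((b - a) / n) - (a + (i.castSucc : ℕ) * ((b - a) / n))
        = (b - a) / n := by
          rw [Fin.val_succ, Fin.val_castSucc, Nat.cast_add_one]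
          ring
      _ < δ := (div_lt_comm₀ hδ hn_pos).1 hn

lemma exists_leftSum_mem_riemannSums (f g : ℝ → ℝ) {δ : ℝ} (hab : a < b) (hδ : 0 < δ) :
    ∃ P, IsPartition P a b ∧ leftSum f g P ∈ riemannSums f g a b δ := by
  obtain ⟨n, t, ht, rfl, rfl, h_mesh⟩ := exists_strictMono_mesh_lt hab hδ
  exact ⟨_, isPartition_image ht, n, t, fun i => t i.castSucc, ht, rfl, rfl,
    fun i => ⟨le_rfl, (ht i.castSucc_lt_succ).le⟩, h_mesh, (leftSum_image f g ht).symm⟩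

lemma exists_rsIntegral_of_cauchy (hab : a < b)
    (h_cauchy : ∀ ε > 0, ∃ δ > 0, ∀ S ∈ riemannSums f g a b δ, ∀ S' ∈ riemannSums f g a b δ,
      |S - S'| < ε) : ∃ I, RSIntegral f g a b I := by
  let F : Filter ℝ := ⨅ δ ∈ Ioi (0 : ℝ), 𝓟 (riemannSums f g a b δ)
  have h_basis : F.HasBasis (fun δ => δ ∈ Ioi 0) (riemannSums f g a b) :=
    hasBasis_biInf_principal (fun δ hδ δ' hδ' => ⟨min δ δ',
      mem_Ioi.2 (lt_min hδ hδ'), riemannSums_mono (min_le_left _ _),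
      riemannSums_mono (min_le_right _ _)⟩) ⟨1, mem_Ioi.2 one_pos⟩
  have h_neBot : F.NeBot := h_basis.neBot_iff.2 fun hδ =>
    let ⟨P, _, hP⟩ := exists_leftSum_mem_riemannSums f g hab hδ
    ⟨leftSum f g P, hP⟩
  have hF : Cauchy F := Metric.cauchy_iff.2 ⟨h_neBot, fun ε hε =>
    let ⟨δ, hδ, h⟩ := h_cauchy ε hε
    ⟨_, h_basis.mem_of_mem hδ, h⟩⟩
  obtain ⟨I, hI⟩ := CompleteSpace.complete hF
  refine ⟨I, rsIntegral_iff.2 fun ε hε => ?_⟩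
  obtain ⟨δ, hδ, h⟩ := h_basis.mem_iff.1 (hI (Metric.ball_mem_nhds I hε))
  exact ⟨δ, hδ, h⟩

lemma RSIntegral.abs_sub_le_of_leftSum {I x K : ℝ} (hI : RSIntegral f g a b I) (hab : a < b)
    (h : ∀ P, IsPartition P a b → |leftSum f g P - x| ≤ K) : |I - x| ≤ K := by
  refine le_of_forall_pos_le_add fun ε hε => ?_
  obtain ⟨δ, hδ, h_near⟩ := rsIntegral_iff.1 hI ε hε
  obtain ⟨P, hP, hP_mem⟩ := exists_leftSum_mem_riemannSums f g hab hδ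
  have hIP := h_near _ hP_mem
  rw [abs_sub_comm] at hIP
  calc |I - x| ≤ |I - leftSum f g P| + |leftSum f g P - x| := abs_sub_le _ _ _
    _ ≤ K + ε := by linarith [h P hP]

end RiemannSums

section Existence

variable {f g : ℝ → ℝ} {p q a b : ℝ}

lemma exists_mem_nhdsWithin_abs_sub_le {D : Set ℝ} {x ε : ℝ} (hf : ContinuousWithinAt f D x)
    (hε : 0 < ε) : ∃ U ∈ 𝓝[D] x, ∀ y ∈ U, ∀ z ∈ U, |f z - f y| ≤ ε := by
  refine ⟨f ⁻¹' Metric.ball (f x) (ε / 2), hf (Metric.ball_mem_nhds _ (half_pos hε)),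
    fun y hy z hz => ?_⟩
  calc dist (f z) (f y) ≤ dist (f z) (f x) + dist (f y) (f x) := dist_triangle_right _ _ _
    _ ≤ ε / 2 + ε / 2 := add_le_add (Metric.mem_ball.1 hz).le (Metric.mem_ball.1 hy).le
    _ = ε := add_halves ε

lemma NoCommonDiscont.exists_pos_oscLE_or_oscLE (h : NoCommonDiscont f g a b) {ε : ℝ}
    (hε : 0 < ε) : ∃ δ > 0, ∀ u ∈ Icc a b, ∀ v ∈ Icc a b, v - u < δ →
      OscLE f ε u v ∨ OscLE g ε u v := by
  have h_local : ∀ x ∈ Icc a b, ∃ U ∈ 𝓝[Icc a b] x,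
      (∀ y ∈ U, ∀ z ∈ U, |f z - f y| ≤ ε) ∨ ∀ y ∈ U, ∀ z ∈ U, |g z - g y| ≤ ε := by
    intro x hx
    rcases h x hx with hf | hg
    · obtain ⟨U, hU, hfU⟩ := exists_mem_nhdsWithin_abs_sub_le hf hε
      exact ⟨U, hU, .inl hfU⟩
    · obtain ⟨U, hU, hgU⟩ := exists_mem_nhdsWithin_abs_sub_le hg hε
      exact ⟨U, hU, .inr hgU⟩
  choose U hU h_osc using h_local
  obtain ⟨δ, hδ, h_lebesgue⟩ :=
    Metric.uniformity_basis_dist.lebesgue_number_lemma_nhdsWithin' isCompact_Icc hU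
  refine ⟨δ, hδ, fun u hu v hv huv => ?_⟩
  obtain ⟨x, hx⟩ := h_lebesgue u hu
  have h_mem : ∀ y ∈ Icc u v, y ∈ U x x.2 := by
    refine fun y hy => hx ⟨?_, hu.1.trans hy.1, hy.2.trans hv.2⟩
    change dist u y < δ
    rw [dist_comm, Real.dist_eq, abs_of_nonneg (sub_nonneg.2 hy.1)]
    linarith [hy.2]
  exact (h_osc x x.2).imp (fun h y hy z hz => h y (h_mem y hy) z (h_mem z hz))
    fun h y hy z hz => h y (h_mem y hy) z (h_mem z hz)

lemma abs_sum_sub_leftSum_image_le {ωf ωg : ℝ} (hp : 1 < p) (hq : 1 < q)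
    (hpq : 1 < 1 / p + 1 / q) (hf : pVar f p a b < ⊤) (hg : pVar g q a b < ⊤) (hωf : 0 ≤ ωf)
    (hωg : 0 ≤ ωg) {n : ℕ} {t : Fin (n + 1) → ℝ} {ξ : Fin n → ℝ} (ht : StrictMono t)
    (ht_Icc : ∀ i, t i ∈ Icc a b) (hξ : ∀ i : Fin n, t i.castSucc ≤ ξ i ∧ ξ i ≤ t i.succ)
    (h_osc : ∀ i : Fin n,
      OscLE f ωf (t i.castSucc) (t i.succ) ∨ OscLE g ωg (t i.castSucc) (t i.succ)) :
    |∑ i, f (ξ i) * (g (t i.succ) - g (t i.castSucc)) - leftSum f g (Finset.univ.image t)| ≤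
      youngBound p q (pVarNorm f p a b) (pVarNorm g q a b) ωf +
        youngBound q p (pVarNorm g q a b) (pVarNorm f p a b) ωg := by
  let α : Fin n → ℝ := fun i => f (ξ i) - f (t i.castSucc)
  let β : Fin n → ℝ := fun i => g (t i.succ) - g (t i.castSucc)
  have ht_lt (i : Fin n) : t i.castSucc < t i.succ := ht i.castSucc_lt_succ
  have h_order {i j : Fin n} (hij : i < j) : t i.succ ≤ t j.castSucc :=
    ht.monotone (Fin.succ_le_castSucc_iff.2 hij)
  have hα (s : Finset (Fin n)) : ∑ i ∈ s, |α i| ^ p ≤ pVarNorm f p a b ^ p :=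
    sum_rpow_le_pVarNorm_rpow_of_nonoverlapping (by positivity) hf (fun i _ => ht_Icc _)
      (fun i _ => ⟨(ht_Icc _).1.trans (hξ i).1, (hξ i).2.trans (ht_Icc _).2⟩)
      (fun i _ => (hξ i).1) fun i _ j _ hne => hne.lt_or_gt.imp
        (fun h => (hξ i).2.trans (h_order h)) fun h => (hξ j).2.trans (h_order h)
  have hβ (s : Finset (Fin n)) : ∑ i ∈ s, |β i| ^ q ≤ pVarNorm g q a b ^ q :=
    sum_rpow_le_pVarNorm_rpow_of_nonoverlapping (by positivity) hg (fun i _ => ht_Icc _)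
      (fun i _ => ht_Icc _) (fun i _ => (ht_lt i).le)
      fun i _ j _ hne => hne.lt_or_gt.imp h_order h_order
  have hαβ (i : Fin n) : |α i| ≤ ωf ∨ |β i| ≤ ωg :=
    (h_osc i).imp (fun h => h _ ⟨le_rfl, (ht_lt i).le⟩ _ (hξ i))
      (fun h => h _ ⟨le_rfl, (ht_lt i).le⟩ _ ⟨(ht_lt i).le, le_rfl⟩)
  have h_sum : ∑ i, f (ξ i) * (g (t i.succ) - g (t i.castSucc)) -
      leftSum f g (Finset.univ.image t) = ∑ i, α i * β i - ∑ i ∈ ∅, α i * β i := by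
    rw [leftSum_image f g ht, ← Finset.sum_sub_distrib, Finset.sum_empty, sub_zero]
    exact Finset.sum_congr rfl fun i _ => (sub_mul _ _ _).symm
  rw [h_sum]
  exact abs_sub_empty_le_youngBound_add (Φ := fun s => ∑ i ∈ s, α i * β i) hp hq hpq
    pVarNorm_nonneg pVarNorm_nonneg hωf hωg fun s _ =>
      ⟨α, β, hα s, hβ s, fun i hi => ⟨sub_eq_of_eq_add (Finset.add_sum_erase s _ hi).symm, hαβ i⟩⟩

lemma NoCommonDiscont.exists_pos_riemannSums_near_leftSum (h : NoCommonDiscont f g a b)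
    (hp : 1 < p) (hq : 1 < q) (hpq : 1 < 1 / p + 1 / q) (hf : pVar f p a b < ⊤)
    (hg : pVar g q a b < ⊤) {ε : ℝ} (hε : 0 < ε) :
    ∃ δ > 0, ∀ S ∈ riemannSums f g a b δ, ∃ P, IsPartition P a b ∧
      (∀ c ∈ gaps P, OscLE f ε c.1 c.2 ∨ OscLE g ε c.1 c.2) ∧
      |S - leftSum f g P| ≤ youngBound p q (pVarNorm f p a b) (pVarNorm g q a b) ε +
        youngBound q p (pVarNorm g q a b) (pVarNorm f p a b) ε := by
  obtain ⟨δ, hδ, h_osc⟩ := h.exists_pos_oscLE_or_oscLE hε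
  refine ⟨δ, hδ, ?_⟩
  rintro _ ⟨n, t, ξ, ht, rfl, rfl, hξ, h_mesh, rfl⟩
  have hP := isPartition_image ht
  have ht_Icc (i) : t i ∈ Icc (t 0) (t (Fin.last n)) :=
    hP.subset_Icc (Finset.mem_image_of_mem t (Finset.mem_univ i))
  have h_cells (i : Fin n) :
      OscLE f ε (t i.castSucc) (t i.succ) ∨ OscLE g ε (t i.castSucc) (t i.succ) :=
    h_osc _ (ht_Icc _) _ (ht_Icc _) (h_mesh i)
  refine ⟨_, hP, ?_,
    abs_sum_sub_leftSum_image_le hp hq hpq hf hg hε.le hε.le ht ht_Icc hξ h_cells⟩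
  rw [gaps_image ht, Finset.forall_mem_image]
  exact fun i _ => h_cells i

lemma NoCommonDiscont.exists_rsIntegral (h : NoCommonDiscont f g a b) (hp : 1 < p) (hq : 1 < q)
    (hpq : 1 < 1 / p + 1 / q) (hab : a < b) (hf : pVar f p a b < ⊤) (hg : pVar g q a b < ⊤) :
    ∃ I, RSIntegral f g a b I := by
  let E : ℝ → ℝ := fun ε => youngBound p q (pVarNorm f p a b) (pVarNorm g q a b) ε +
    youngBound q p (pVarNorm g q a b) (pVarNorm f p a b) ε
  have hp' : 0 < p := zero_lt_one.trans hp
  have hq' : 0 < q := zero_lt_one.trans hq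
  have hqp : 1 < 1 / q + 1 / p := by rwa [add_comm]
  have hE_zero : E 0 = 0 := by
    simp only [E, youngBound_zero hp' hpq, youngBound_zero hq' hqp, add_zero]
  have hE_cont : Continuous E := (continuous_youngBound hp' hpq).add (continuous_youngBound hq' hqp)
  refine exists_rsIntegral_of_cauchy hab fun η hη => ?_
  obtain ⟨ε, hEε, hε⟩ : ∃ ε, E ε < η / 4 ∧ 0 < ε :=
    (((hE_cont.tendsto 0).eventually_lt_const (by rw [hE_zero]; positivity)).filter_mono
      nhdsWithin_le_nhds |>.and self_mem_nhdsWithin).exists (f := 𝓝[>] 0)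
  obtain ⟨δ, hδ, h_near⟩ := h.exists_pos_riemannSums_near_leftSum hp hq hpq hf hg hε
  refine ⟨δ, hδ, fun S hS S' hS' => ?_⟩
  obtain ⟨P, hP, hP_osc, hSP⟩ := h_near S hS
  obtain ⟨P', hP', hP'_osc, hSP'⟩ := h_near S' hS'
  have hPQ := abs_leftSum_sub_leftSum_le hp hq hpq hf hg hε.le hε.le hP (hP.union hP').subset_Icc
    Finset.subset_union_left hP_osc
  have hP'Q := abs_leftSum_sub_leftSum_le hp hq hpq hf hg hε.le hε.le hP'
    (hP.union hP').subset_Icc Finset.subset_union_right hP'_osc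
  rw [abs_lt]
  rw [abs_le] at hSP hSP' hPQ hP'Q
  constructor <;> linarith

end Existence

/-- Improved Loéve–Young inequality. -/
theorem improved_loeve_young
    (p q : ℝ) (hp : 1 < p) (hq : 1 < q) (hpq : 1 / p + 1 / q > 1) :
    ∃ C : ℝ, 0 < C ∧ ∀ (a b : ℝ), a < b → ∀ f g : ℝ → ℝ,
      NoCommonDiscont f g a b → pVar f p a b < ⊤ → pVar g q a b < ⊤ →
      ∃ I : ℝ, RSIntegral f g a b I ∧
        |I - f a * (g b - g a)| ≤
          C * pVarNorm f p a b ^ (p - p / q) *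
            oscNorm f a b ^ (1 + p / q - p) * pVarNorm g q a b := by
  refine ⟨youngConst p q, youngConst_pos (zero_lt_one.trans hp) hq hpq, ?_⟩
  intro a b hab f g hfg hf hg
  obtain ⟨I, hI⟩ := hfg.exists_rsIntegral hp hq hpq hab hf hg
  exact ⟨I, hI, hI.abs_sub_le_of_leftSum hab fun P hP =>
    abs_leftSum_sub_le hp hq hpq hab hf hg hP⟩
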